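/- The sl(2) Lie–Poisson bracket {·,·}_0 and the cubic bracket {·,·}_1 are compatible: for all scalars α, β ∈ ℂ, the bracket α{·,·}_0 + β{·,·}_1 satisfies the Jacobi identity on polynomials in s_1, s_2, s_3. -/

import Mathlib

/-!
STATEMENT 3: The sl(2) Lie–Poisson bracket {·,·}_0 and the cubic bracket {·,·}_1 on
polynomials in s_1, s_2, s_3 over ℂ are compatible: every linear combination
α{·,·}_0 + β{·,·}_1 satisfies the Jacobi identity.
-/

noncomputable section
open MvPolynomial

/-- Polynomials in the three variables s_1, s_2, s_3 over ℂ. -/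
abbrev P3 := MvPolynomial (Fin 3) ℂ

/-- The bracket on polynomials associated with a Poisson structure matrix `π`:
`{f,g} = Σ_{i,j} π i j ∂_i f ∂_j g`. -/
noncomputable def sbr3 (π : Fin 3 → Fin 3 → P3) (f g : P3) : P3 :=
  ∑ i : Fin 3, ∑ j : Fin 3, π i j * pderiv i f * pderiv j g

/-- The cubic factor W = (s_3+c)² − 2a_1(s_1+ i s_2)(s_3+c) − 2a_0(s_1+ i s_2). -/
noncomputable def Wfac (a0 a1 c : ℂ) : P3 :=
  (X 2 + C c) ^ 2 - C (2 * a1) * (X 0 + C Complex.I * X 1) * (X 2 + C c)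
    - C (2 * a0) * (X 0 + C Complex.I * X 1)

/-- The sl(2) Lie–Poisson structure matrix: {s_i,s_j}_0 = ε_{ijk} s_k. -/
noncomputable def pi30 : Fin 3 → Fin 3 → P3 := fun i j =>
  !![0, X 2, -(X 1); -(X 2), 0, X 0; X 1, -(X 0), 0] i j

/-- The cubic structure matrix: {s_i,s_j}_1 = ε_{ijk} s_k · W. -/
noncomputable def pi31 (a0 a1 c : ℂ) : Fin 3 → Fin 3 → P3 := fun i j =>
  pi30 i j * Wfac a0 a1 c

/-- The linear combination α{·,·}_0 + β{·,·}_1. -/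
noncomputable def combo3 (α β a0 a1 c : ℂ) (f g : P3) : P3 :=
  C α * sbr3 pi30 f g + C β * sbr3 (pi31 a0 a1 c) f g

theorem combo3_eq (α β a0 a1 c : ℂ) (f g : P3) :
    combo3 α β a0 a1 c f g = (C α + C β * Wfac a0 a1 c) *
      (X 2 * (pderiv 0 f * pderiv 1 g - pderiv 1 f * pderiv 0 g)
      + X 0 * (pderiv 1 f * pderiv 2 g - pderiv 2 f * pderiv 1 g)
      + X 1 * (pderiv 2 f * pderiv 0 g - pderiv 0 f * pderiv 2 g)) := by
  simp [combo3, sbr3, pi31, pi30, Fin.sum_univ_three]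
  ring

theorem pderiv_swap (i j : Fin 3) (f : P3) :
    pderiv i (pderiv j f) = pderiv j (pderiv i f) := by
  have h : ⁅(pderiv i : Derivation ℂ P3 P3), (pderiv j : Derivation ℂ P3 P3)⁆ = 0 := by
    apply MvPolynomial.derivation_ext
    intro k
    simp [Derivation.commutator_apply, pderiv_X, Pi.single_apply, apply_ite]
  have := congrArg (fun D : Derivation ℂ P3 P3 => D f) h
  simpa [Derivation.commutator_apply, sub_eq_zero] using this

theorem jac3 (V f g h : P3) (B : P3 → P3 → P3)
    (hB : ∀ f g, B f g = V *
      (X 2 * (pderiv 0 f * pderiv 1 g - pderiv 1 f * pderiv 0 g)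
      + X 0 * (pderiv 1 f * pderiv 2 g - pderiv 2 f * pderiv 1 g)
      + X 1 * (pderiv 2 f * pderiv 0 g - pderiv 0 f * pderiv 2 g))) :
    B f (B g h) + B g (B h f) + B h (B f g) = 0 := by
  have x01 : pderiv (0 : Fin 3) (X 1 : P3) = 0 := pderiv_X_of_ne (by decide)
  have x02 : pderiv (0 : Fin 3) (X 2 : P3) = 0 := pderiv_X_of_ne (by decide)
  have x10 : pderiv (1 : Fin 3) (X 0 : P3) = 0 := pderiv_X_of_ne (by decide)
  have x12 : pderiv (1 : Fin 3) (X 2 : P3) = 0 := pderiv_X_of_ne (by decide)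
  have x20 : pderiv (2 : Fin 3) (X 0 : P3) = 0 := pderiv_X_of_ne (by decide)
  have x21 : pderiv (2 : Fin 3) (X 1 : P3) = 0 := pderiv_X_of_ne (by decide)
  simp only [hB, map_add, map_sub, Derivation.leibniz, smul_eq_mul, pderiv_X_self,
    x01, x02, x10, x12, x20, x21, pderiv_swap 1 0, pderiv_swap 2 0, pderiv_swap 2 1]
  ring

theorem statement3 (a0 a1 c : ℂ) (α β : ℂ) (f g h : P3) :
    combo3 α β a0 a1 c f (combo3 α β a0 a1 c g h)
      + combo3 α β a0 a1 c g (combo3 α β a0 a1 c h f)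
      + combo3 α β a0 a1 c h (combo3 α β a0 a1 c f g) = 0 := by
  exact jac3 _ f g h _ (combo3_eq α β a0 a1 c)

end
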